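/- Let X be a simplicial complex on a finite vertex set V, let A ⊆ V, and let d ≥ 0. For integers k_1 ≥ 0 and k_2 ≥ 1, the pair (X,A) satisfies property P_d(k_1,k_2) if and only if it satisfies property P_d(k_1+1, k_2−1). -/

import Mathlib

open Finset

/-- An abstract simplicial complex on the vertex type `V`: a set of finite subsets
("simplices") closed under taking subsets. -/
def IsComplex {V : Type*} (X : Set (Finset V)) : Prop :=
  ∀ σ ∈ X, ∀ τ, τ ⊆ σ → τ ∈ X

variable {V : Type*}

/-- The induced subcomplex `X[S] = {σ ∈ X : σ ⊆ S}`. -/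
def induce (X : Set (Finset V)) (S : Finset V) : Set (Finset V) :=
  {σ | σ ∈ X ∧ σ ⊆ S}

/-- The link `lk(X,τ) = {σ : σ ∪ τ ∈ X, σ ∩ τ = ∅}`; it is the void complex if `τ ∉ X`. -/
def link [DecidableEq V] (X : Set (Finset V)) (τ : Finset V) : Set (Finset V) :=
  {σ | σ ∪ τ ∈ X ∧ Disjoint σ τ}

/-- The star `str(X,τ) = {σ ∈ X : σ ∪ τ ∈ X}`. -/
def star [DecidableEq V] (X : Set (Finset V)) (τ : Finset V) : Set (Finset V) :=
  {σ | σ ∈ X ∧ σ ∪ τ ∈ X}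

/-- The Alexander dual `X^∨ = {A ⊆ V : V \ A ∉ X}` of a complex on the finite vertex set
`V`. -/
def alexDual [Fintype V] [DecidableEq V] (X : Set (Finset V)) : Set (Finset V) :=
  {A | Aᶜ ∉ X}

section Homology

variable (F : Type) [Field F]

/-- The faces of `X` of cardinality `n` (i.e. of dimension `n-1`). -/
def Face (X : Set (Finset V)) (n : ℕ) : Type _ :=
  {σ : Finset V // σ ∈ X ∧ σ.card = n}

/-- Simplicial chains in dimension `n-1`: formal `F`-linear combinations of faces of
cardinality `n`.  Since the empty face spans the degree `n = 0` part, this yields the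
*augmented* simplicial chain complex of `X`. -/
def SChain (X : Set (Finset V)) (n : ℕ) : Type _ := Face X n →₀ F

noncomputable instance (X : Set (Finset V)) (n : ℕ) : AddCommGroup (SChain F X n) :=
  Finsupp.instAddCommGroup

noncomputable instance (X : Set (Finset V)) (n : ℕ) : Module F (SChain F X n) :=
  Finsupp.module (Face X n) F

variable [LinearOrder V]

open Classical in
/-- The boundary of a face of cardinality `n+1`: the alternating sum of its codimension-one
subfaces, with signs determined by the linear order on the vertices. -/
noncomputable def bdryElem (X : Set (Finset V)) (n : ℕ) (σ : Face X (n+1)) :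
    SChain F X n :=
  ∑ x ∈ σ.1.attach,
    if h : σ.1.erase ↑x ∈ X then
      ((-1 : F) ^ ((σ.1.filter (fun y => y < (x : V))).card)) •
        (Finsupp.single (⟨σ.1.erase ↑x, h, by
          rw [Finset.card_erase_of_mem x.2, σ.2.2]; rfl⟩ : Face X n) 1 : SChain F X n)
    else 0

/-- The simplicial boundary map (in degree `0` it is the augmentation `C_0 → C_{-1} ≅ F`
encoded by `scyc`). -/
noncomputable def sbdry (X : Set (Finset V)) (n : ℕ) :
    SChain F X (n+1) →ₗ[F] SChain F X n :=
  Finsupp.lsum F fun σ => LinearMap.toSpanSingleton F (SChain F X n) (bdryElem F X n σ)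

/-- The cycles of the augmented simplicial chain complex. -/
noncomputable def scyc (X : Set (Finset V)) : (n : ℕ) → Submodule F (SChain F X n)
  | 0 => ⊤
  | (n+1) => LinearMap.ker (sbdry F X n)

/-- `RH F X n` is the reduced simplicial homology `h̃_{n-1}(X; F)` of `X` with coefficients
in `F` (faces of cardinality `n` have dimension `n-1`). -/
abbrev RH (X : Set (Finset V)) (n : ℕ) : Type _ :=
  scyc F X n ⧸ Submodule.comap (scyc F X n).subtype (LinearMap.range (sbdry F X n))

/-- `X` is `d`-Leray over `F`: every induced subcomplex has vanishing reduced homology in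
all dimensions `i ≥ d`. -/
def IsLeray (d : ℕ) (X : Set (Finset V)) : Prop :=
  ∀ S : Finset V, ∀ i : ℕ, d ≤ i → Subsingleton (RH F (induce X S) (i+1))

end Homology


/-- Property `P_d(k₁,k₂)` for a pair `(X, A)`:
`h̃_i(lk(X[V \ σ₁], σ₂); F) = 0` for all `i ≥ d` and all disjoint `σ₁, σ₂ ⊆ A` with
`|σ₁| ≤ k₁` and `|σ₂| ≤ k₂`. -/
def PropertyP {V : Type} [Fintype V] [LinearOrder V] (F : Type) [Field F]
    (X : Set (Finset V)) (A : Finset V) (d k₁ k₂ : ℕ) : Prop :=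
  ∀ σ₁ σ₂ : Finset V, σ₁ ⊆ A → σ₂ ⊆ A → Disjoint σ₁ σ₂ →
    σ₁.card ≤ k₁ → σ₂.card ≤ k₂ →
    ∀ i : ℕ, d ≤ i → Subsingleton (RH F (link (induce X σ₁ᶜ) σ₂) (i + 1))

/-!
For a complex `Y` and a vertex `v` there is a long exact sequence
`⋯ → h̃_{i+1}(Y) → h̃_i(lk(Y, v)) → h̃_i(Y \ v) → h̃_i(Y) → ⋯`. Hence `h̃_i(Y \ v)` vanishes if
`h̃_i(Y)` and `h̃_i(lk(Y, v))` do, and `h̃_i(lk(Y, v))` vanishes if `h̃_{i+1}(Y)` and `h̃_i(Y \ v)`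
do. For `Y = lk(X[V \ σ₁], σ₂)`, passing to `Y \ v` adds `v` to `σ₁` and passing to `lk(Y, v)` adds
`v` to `σ₂`, so a vertex can be moved between `σ₁` and `σ₂` in both directions.

These two parts of the exact sequence come from operators on the chains of the full simplex. The
boundary `∂` is the sum of the contractions `ι_x`, and the `ι_x` satisfy with the cone operator
`κ_v` the relations `ι_x ι_y = -ι_y ι_x`, `ι_x κ_v = -κ_v ι_x` for `x ≠ v`, and
`ι_v κ_v + κ_v ι_v = 1`. It follows that `∂ ι_v = -ι_v ∂` and `∂ κ_v + κ_v ∂ = 1`; the connecting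
map is induced by `ι_v`.
-/

section Sign

variable {R : Type*} [CommRing R] [LinearOrder V]

/-- The incidence sign `(-1)^#{y ∈ σ | y < v}` of the vertex `v` relative to `σ`. It is also
defined for `v ∉ σ`, and does not depend on whether `v ∈ σ`. -/
def vertexSign (R : Type*) [CommRing R] (σ : Finset V) (v : V) : R :=
  (-1) ^ #{y ∈ σ | y < v}

lemma vertexSign_mul_self (σ : Finset V) (v : V) :
    vertexSign R σ v * vertexSign R σ v = 1 := by
  simp [vertexSign, ← mul_pow]

lemma vertexSign_insert {σ : Finset V} {x : V} (hx : x ∉ σ) (y : V) :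
    vertexSign R (insert x σ) y = if x < y then -vertexSign R σ y else vertexSign R σ y := by
  unfold vertexSign
  split_ifs with hxy
  · rw [filter_insert, if_pos hxy, card_insert_of_notMem (by simp [hx]), pow_succ, mul_neg_one]
  · rw [filter_insert, if_neg hxy]

lemma vertexSign_insert_self (σ : Finset V) (v : V) :
    vertexSign R (insert v σ) v = vertexSign R σ v := by
  simp [vertexSign, filter_insert]

lemma vertexSign_mul_vertexSign_insert {σ : Finset V} {x y : V} (hx : x ∉ σ) (hy : y ∉ σ)
    (hxy : x ≠ y) :
    vertexSign R σ x * vertexSign R (insert x σ) y =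
      -(vertexSign R σ y * vertexSign R (insert y σ) x) := by
  rw [vertexSign_insert hx, vertexSign_insert hy]
  rcases hxy.lt_or_gt with h | h <;> simp [h, h.not_gt, mul_comm]

lemma vertexSign_insert_mul_vertexSign_insert {σ : Finset V} {x y : V} (hx : x ∉ σ)
    (hy : y ∉ σ) (hxy : x ≠ y) :
    vertexSign R (insert x σ) y * vertexSign R (insert y σ) x =
      -(vertexSign R σ x * vertexSign R σ y) := by
  rw [vertexSign_insert hx, vertexSign_insert hy]
  rcases hxy.lt_or_gt with h | h <;> simp [h, h.not_gt, mul_comm]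

end Sign

section Operators

variable {R : Type*} [CommRing R] [LinearOrder V]

/-- Contraction with the vertex `v` on the free module on all finite vertex sets: the part of the
boundary that deletes `v`. On a complex it takes a chain to its component in the link of `v`. -/
noncomputable def contract (R : Type*) [CommRing R] (v : V) : (Finset V →₀ R) →ₗ[R] Finset V →₀ R :=
  Finsupp.linearCombination R fun σ =>
    if v ∈ σ then Finsupp.single (σ.erase v) (vertexSign R σ v) else 0

/-- The cone operator with apex `v`, extended by zero to the sets that contain `v`. -/
noncomputable def cone (R : Type*) [CommRing R] (v : V) : (Finset V →₀ R) →ₗ[R] Finset V →₀ R :=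
  Finsupp.linearCombination R fun σ =>
    if v ∈ σ then 0 else Finsupp.single (insert v σ) (vertexSign R σ v)

/-- The boundary operator of the full simplex on `V`, on chains of all dimensions at once. The
boundary map of every complex is a restriction of it. -/
noncomputable def boundary (R : Type*) [CommRing R] : (Finset V →₀ R) →ₗ[R] Finset V →₀ R :=
  Finsupp.linearCombination R fun σ => ∑ x ∈ σ, contract R x (Finsupp.single σ 1)

lemma contract_single_of_mem {σ : Finset V} {v : V} (hv : v ∈ σ) (r : R) :
    contract R v (Finsupp.single σ r) = Finsupp.single (σ.erase v) (r * vertexSign R σ v) := by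
  simp [contract, hv]

lemma contract_single_of_notMem {σ : Finset V} {v : V} (hv : v ∉ σ) (r : R) :
    contract R v (Finsupp.single σ r) = 0 := by
  simp [contract, hv]

lemma contract_single_insert {σ : Finset V} {v : V} (hv : v ∉ σ) (r : R) :
    contract R v (Finsupp.single (insert v σ) r) = Finsupp.single σ (r * vertexSign R σ v) := by
  rw [contract_single_of_mem (mem_insert_self v σ), erase_insert hv, vertexSign_insert_self]

lemma cone_single_of_mem {σ : Finset V} {v : V} (hv : v ∈ σ) (r : R) :
    cone R v (Finsupp.single σ r) = 0 := by
  simp [cone, hv]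

lemma cone_single_of_notMem {σ : Finset V} {v : V} (hv : v ∉ σ) (r : R) :
    cone R v (Finsupp.single σ r) = Finsupp.single (insert v σ) (r * vertexSign R σ v) := by
  simp [cone, hv]

lemma boundary_single {σ S : Finset V} (hσ : σ ⊆ S) (r : R) :
    boundary R (Finsupp.single σ r) = ∑ x ∈ S, contract R x (Finsupp.single σ r) := by
  calc boundary R (Finsupp.single σ r)
      = ∑ x ∈ σ, contract R x (Finsupp.single σ r) := by
        simp [boundary, smul_sum, ← map_smul]
    _ = ∑ x ∈ S, contract R x (Finsupp.single σ r) :=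
        sum_subset hσ fun x _ hx => contract_single_of_notMem hx r

lemma boundary_contract_single {σ S : Finset V} (hσ : σ ⊆ S) (v : V) (r : R) :
    boundary R (contract R v (Finsupp.single σ r)) =
      ∑ x ∈ S, contract R x (contract R v (Finsupp.single σ r)) := by
  by_cases hv : v ∈ σ
  · rw [contract_single_of_mem hv, boundary_single ((erase_subset v σ).trans hσ)]
  · simp [contract_single_of_notMem hv]

lemma boundary_cone_single {σ S : Finset V} {v : V} (hσ : insert v σ ⊆ S) (r : R) :
    boundary R (cone R v (Finsupp.single σ r)) =
      ∑ x ∈ S, contract R x (cone R v (Finsupp.single σ r)) := by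
  by_cases hv : v ∈ σ
  · simp [cone_single_of_mem hv]
  · rw [cone_single_of_notMem hv, boundary_single hσ]

lemma contract_contract_self (v : V) (c : Finset V →₀ R) :
    contract R v (contract R v c) = 0 := by
  induction c using Finsupp.induction_linear with
  | zero => simp
  | add a b ha hb => simp [ha, hb]
  | single σ r =>
    by_cases hv : v ∈ σ
    · rw [contract_single_of_mem hv, contract_single_of_notMem (notMem_erase v σ)]
    · rw [contract_single_of_notMem hv, map_zero]

lemma contract_contract_single_of_notMem {σ : Finset V} {x : V} (hx : x ∉ σ) (y : V) (r : R) :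
    contract R x (contract R y (Finsupp.single σ r)) = 0 := by
  by_cases hy : y ∈ σ
  · rw [contract_single_of_mem hy, contract_single_of_notMem fun h => hx (mem_of_mem_erase h)]
  · rw [contract_single_of_notMem hy, map_zero]

lemma contract_contract_comm (x y : V) (c : Finset V →₀ R) :
    contract R x (contract R y c) = -contract R y (contract R x c) := by
  obtain rfl | hxy := eq_or_ne x y
  · simp [contract_contract_self]
  induction c using Finsupp.induction_linear with
  | zero => simp
  | add a b ha hb => simp only [map_add, ha, hb, neg_add]
  | single σ r =>
    by_cases hx : x ∉ σ
    · simp [contract_single_of_notMem hx, contract_contract_single_of_notMem hx]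
    by_cases hy : y ∉ σ
    · simp [contract_single_of_notMem hy, contract_contract_single_of_notMem hy]
    rw [not_not] at hx hy
    obtain ⟨τ, hxyτ, rfl⟩ : ∃ τ, (x ∉ τ ∧ y ∉ τ) ∧ insert x (insert y τ) = σ :=
      ⟨(σ.erase x).erase y, by simp, by
        rw [insert_erase (mem_erase.2 ⟨hxy.symm, hy⟩), insert_erase hx]⟩
    obtain ⟨hxτ, hyτ⟩ := hxyτ
    rw [contract_single_insert (by simp [hxy, hxτ]), contract_single_insert hyτ, insert_comm,
      contract_single_insert (by simp [hxy.symm, hyτ]), contract_single_insert hxτ,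
      ← Finsupp.single_neg]
    congr 1
    linear_combination r * vertexSign_mul_vertexSign_insert (R := R) hxτ hyτ hxy

lemma contract_cone_of_ne {x v : V} (hxv : x ≠ v) (c : Finset V →₀ R) :
    contract R x (cone R v c) = -cone R v (contract R x c) := by
  induction c using Finsupp.induction_linear with
  | zero => simp
  | add a b ha hb => simp only [map_add, ha, hb, neg_add]
  | single σ r =>
    by_cases hx : x ∉ σ
    · by_cases hv : v ∈ σ
      · simp [contract_single_of_notMem hx, cone_single_of_mem hv]
      · rw [cone_single_of_notMem hv, contract_single_of_notMem (by simp [hxv, hx]),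
          contract_single_of_notMem hx, map_zero, neg_zero]
    rw [not_not] at hx
    by_cases hv : v ∈ σ
    · rw [cone_single_of_mem hv, contract_single_of_mem hx,
        cone_single_of_mem (mem_erase.2 ⟨hxv.symm, hv⟩), map_zero, neg_zero]
    obtain ⟨τ, hxτ, rfl⟩ : ∃ τ, x ∉ τ ∧ insert x τ = σ :=
      ⟨σ.erase x, notMem_erase x σ, insert_erase hx⟩
    have hvτ : v ∉ τ := fun h => hv (mem_insert_of_mem h)
    rw [cone_single_of_notMem hv, insert_comm, contract_single_insert (by simp [hxv, hxτ]),
      contract_single_insert hxτ, cone_single_of_notMem hvτ, ← Finsupp.single_neg]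
    congr 1
    linear_combination r * vertexSign_insert_mul_vertexSign_insert (R := R) hxτ hvτ hxv

lemma contract_cone_add_cone_contract (v : V) (c : Finset V →₀ R) :
    contract R v (cone R v c) + cone R v (contract R v c) = c := by
  induction c using Finsupp.induction_linear with
  | zero => simp
  | add a b ha hb =>
    nth_rewrite 3 [← ha, ← hb]
    simp only [map_add]
    abel
  | single σ r =>
    by_cases hv : v ∈ σ
    · rw [cone_single_of_mem hv, contract_single_of_mem hv,
        cone_single_of_notMem (notMem_erase v σ), insert_erase hv, map_zero, zero_add, mul_assoc]
      nth_rewrite 2 [← insert_erase hv]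
      rw [vertexSign_insert_self, vertexSign_mul_self, mul_one]
    · rw [contract_single_of_notMem hv, cone_single_of_notMem hv, contract_single_insert hv,
        map_zero, add_zero, mul_assoc, vertexSign_mul_self, mul_one]

lemma boundary_contract (v : V) (c : Finset V →₀ R) :
    boundary R (contract R v c) = -contract R v (boundary R c) := by
  induction c using Finsupp.induction_linear with
  | zero => simp
  | add a b ha hb => simp only [map_add, ha, hb, neg_add]
  | single σ r =>
    rw [boundary_contract_single subset_rfl, boundary_single subset_rfl, map_sum,
      ← sum_neg_distrib]
    exact sum_congr rfl fun x _ => contract_contract_comm x v _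

lemma boundary_cone (v : V) (c : Finset V →₀ R) :
    boundary R (cone R v c) = c - cone R v (boundary R c) := by
  rw [eq_sub_iff_add_eq]
  induction c using Finsupp.induction_linear with
  | zero => simp
  | add a b ha hb =>
    nth_rewrite 3 [← ha, ← hb]
    simp only [map_add]
    abel
  | single σ r =>
    rw [boundary_cone_single subset_rfl, boundary_single (subset_insert v σ), map_sum,
      ← sum_add_distrib, sum_eq_single_of_mem v (mem_insert_self v σ) fun x _ hxv => by
        rw [contract_cone_of_ne hxv, neg_add_cancel]]
    exact contract_cone_add_cone_contract v _

end Operators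

section Complexes

lemma IsComplex.induce {X : Set (Finset V)} (hX : IsComplex X) (S : Finset V) :
    IsComplex (induce X S) :=
  fun σ hσ τ hτσ => ⟨hX σ hσ.1 τ hτσ, hτσ.trans hσ.2⟩

lemma IsComplex.link [DecidableEq V] {X : Set (Finset V)} (hX : IsComplex X) (τ : Finset V) :
    IsComplex (link X τ) :=
  fun σ hσ ρ hρσ => ⟨hX (σ ∪ τ) hσ.1 (ρ ∪ τ) (union_subset_union_left hρσ), hσ.2.mono_left hρσ⟩

/-- The deletion `X \ v`. It is the complex `X[V \ {v}]`, written so that `V` may be infinite. -/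
def deletion (X : Set (Finset V)) (v : V) : Set (Finset V) :=
  {σ | σ ∈ X ∧ v ∉ σ}

lemma IsComplex.deletion {X : Set (Finset V)} (hX : IsComplex X) (v : V) :
    IsComplex (deletion X v) :=
  fun σ hσ τ hτσ => ⟨hX σ hσ.1 τ hτσ, fun hv => hσ.2 (hτσ hv)⟩

variable [DecidableEq V]

lemma mem_link_singleton {X : Set (Finset V)} {v : V} {σ : Finset V} :
    σ ∈ link X {v} ↔ insert v σ ∈ X ∧ v ∉ σ := by
  simp [link]

lemma link_singleton_subset_deletion {X : Set (Finset V)} (hX : IsComplex X) (v : V) :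
    link X {v} ⊆ deletion X v := by
  intro σ hσ
  obtain ⟨hvσ, hv⟩ := mem_link_singleton.1 hσ
  exact ⟨hX _ hvσ σ (subset_insert v σ), hv⟩

lemma link_insert (X : Set (Finset V)) {τ : Finset V} {v : V} (hv : v ∉ τ) :
    link X (insert v τ) = link (link X τ) {v} := by
  ext σ
  rw [mem_link_singleton]
  simp only [link, Set.mem_ofPred_eq, disjoint_insert_right, disjoint_insert_left, union_insert,
    insert_union]
  tauto

lemma link_induce_compl_insert [Fintype V] (X : Set (Finset V)) {σ τ : Finset V} {v : V}
    (hv : v ∉ τ) : link (induce X (insert v σ)ᶜ) τ = deletion (link (induce X σᶜ) τ) v := by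
  ext ρ
  simp only [link, induce, deletion, Set.mem_ofPred_eq, compl_insert, subset_erase, mem_union]
  tauto

end Complexes

section Chains

/-- The chains supported on the faces of `X` of cardinality `n`, as a submodule of the chains of
the full simplex on `V`. -/
def chains (R : Type*) [Semiring R] (X : Set (Finset V)) (n : ℕ) : Submodule R (Finset V →₀ R) :=
  Finsupp.supported R R {σ | σ ∈ X ∧ #σ = n}

section Semiring

variable {R : Type*} [Semiring R]

lemma single_mem_chains {X : Set (Finset V)} {σ : Finset V} (hσ : σ ∈ X) (r : R) :
    Finsupp.single σ r ∈ chains R X #σ :=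
  Finsupp.single_mem_supported R r ⟨hσ, rfl⟩

lemma chains_le {X : Set (Finset V)} {n : ℕ} {p : Submodule R (Finset V →₀ R)}
    (h : ∀ σ ∈ X, #σ = n → Finsupp.single σ 1 ∈ p) : chains R X n ≤ p := by
  rw [chains, Finsupp.supported_eq_span_single, Submodule.span_le]
  rintro _ ⟨σ, ⟨hσX, hσn⟩, rfl⟩
  exact h σ hσX hσn

lemma chains_mono {X Y : Set (Finset V)} (hXY : X ⊆ Y) (n : ℕ) : chains R X n ≤ chains R Y n :=
  Finsupp.supported_mono fun _ hσ => ⟨hXY hσ.1, hσ.2⟩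

end Semiring

variable {R : Type*} [CommRing R] [LinearOrder V] {X : Set (Finset V)} {v : V} {n : ℕ}
  {c : Finset V →₀ R}

lemma boundary_eq_zero_of_mem_chains_zero (hc : c ∈ chains R X 0) : boundary R c = 0 := by
  refine chains_le (p := LinearMap.ker (boundary R)) (fun σ _ hσ => ?_) hc
  simp [card_eq_zero.1 hσ, boundary]

lemma contract_mem_chains_link (hc : c ∈ chains R X (n + 1)) :
    contract R v c ∈ chains R (link X {v}) n := by
  refine chains_le (p := (chains R (link X {v}) n).comap (contract R v)) (fun σ hσX hσn => ?_) hc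
  rw [Submodule.mem_comap]
  by_cases hv : v ∈ σ
  · have hσ : σ.erase v ∈ link X {v} :=
      mem_link_singleton.2 ⟨by rwa [insert_erase hv], notMem_erase v σ⟩
    have hn : #(σ.erase v) = n := by rw [card_erase_of_mem hv, hσn, Nat.add_sub_cancel]
    rw [contract_single_of_mem hv, ← hn]
    exact single_mem_chains hσ _
  · rw [contract_single_of_notMem hv]
    exact zero_mem _

lemma contract_eq_zero_of_mem_chains_deletion (hc : c ∈ chains R (deletion X v) n) :
    contract R v c = 0 :=
  chains_le (p := LinearMap.ker (contract R v))
    (fun _ hσ _ => contract_single_of_notMem hσ.2 1) hc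

lemma contract_cone_of_mem_chains_deletion (hc : c ∈ chains R (deletion X v) n) :
    contract R v (cone R v c) = c := by
  simpa [contract_eq_zero_of_mem_chains_deletion hc] using contract_cone_add_cone_contract v c

lemma cone_mem_chains (hc : c ∈ chains R (link X {v}) n) : cone R v c ∈ chains R X (n + 1) := by
  refine chains_le (p := (chains R X (n + 1)).comap (cone R v)) (fun σ hσ hσn => ?_) hc
  obtain ⟨hvσ, hv⟩ := mem_link_singleton.1 hσ
  rw [Submodule.mem_comap, cone_single_of_notMem hv, ← hσn, ← card_insert_of_notMem hv]
  exact single_mem_chains hvσ _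

-- On basis elements `contract R v ∘ cone R v` is the projection that kills the sets containing `v`.
lemma contract_cone_mem_chains_deletion (hc : c ∈ chains R X n) :
    contract R v (cone R v c) ∈ chains R (deletion X v) n := by
  refine chains_le (p := (chains R (deletion X v) n).comap (contract R v ∘ₗ cone R v))
    (fun σ hσX hσn => ?_) hc
  rw [Submodule.mem_comap, LinearMap.comp_apply]
  by_cases hv : v ∈ σ
  · rw [cone_single_of_mem hv, map_zero]
    exact zero_mem _
  · rw [cone_single_of_notMem hv, contract_single_insert hv, ← hσn]
    exact single_mem_chains (show σ ∈ deletion X v from ⟨hσX, hv⟩) _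

end Chains

section Acyclic

variable {R : Type*} [CommRing R] [LinearOrder V]

/-- Vanishing of the reduced homology of `X` with coefficients in `R` at the faces of cardinality
`n`, that is, in dimension `n - 1`. -/
def AcyclicAt (R : Type*) [CommRing R] (X : Set (Finset V)) (n : ℕ) : Prop :=
  ∀ z ∈ chains R X n, boundary R z = 0 → ∃ b ∈ chains R X (n + 1), boundary R b = z

theorem acyclicAt_deletion {X : Set (Finset V)} (hX : IsComplex X) {v : V} {n : ℕ}
    (hXn : AcyclicAt R X n) (hlink : AcyclicAt R (link X {v}) n) :
    AcyclicAt R (deletion X v) n := by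
  intro z hz hz₀
  obtain ⟨w, hw, hwz⟩ := hXn z (chains_mono (fun _ hσ => hσ.1) n hz) hz₀
  have hw₀ : boundary R (contract R v w) = 0 := by
    rw [boundary_contract, hwz, contract_eq_zero_of_mem_chains_deletion hz, neg_zero]
  obtain ⟨t, ht, htw⟩ := hlink _ (contract_mem_chains_link hw) hw₀
  refine ⟨contract R v (cone R v w) + t, add_mem (contract_cone_mem_chains_deletion hw)
    (chains_mono (link_singleton_subset_deletion hX v) _ ht), ?_⟩
  calc boundary R (contract R v (cone R v w) + t)
      = -contract R v (w - cone R v z) + contract R v w := by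
        rw [map_add, boundary_contract, boundary_cone, hwz, htw]
    _ = contract R v (cone R v z) := by rw [map_sub]; abel
    _ = z := contract_cone_of_mem_chains_deletion hz

theorem acyclicAt_link_singleton {X : Set (Finset V)} (hX : IsComplex X) {v : V} {n : ℕ}
    (hXn : AcyclicAt R X (n + 1)) (hdel : AcyclicAt R (deletion X v) n) :
    AcyclicAt R (link X {v}) n := by
  intro z hz hz₀
  have hzdel := chains_mono (link_singleton_subset_deletion hX v) n hz
  obtain ⟨b, hb, hbz⟩ := hdel z hzdel hz₀
  have hc : b - cone R v z ∈ chains R X (n + 1) :=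
    sub_mem (chains_mono (fun _ hσ => hσ.1) _ hb) (cone_mem_chains hz)
  have hc₀ : boundary R (b - cone R v z) = 0 := by
    rw [map_sub, boundary_cone, hbz, hz₀, map_zero, sub_zero, sub_self]
  obtain ⟨e, he, hec⟩ := hXn _ hc hc₀
  refine ⟨contract R v e, contract_mem_chains_link he, ?_⟩
  calc boundary R (contract R v e)
      = contract R v (cone R v z) - contract R v b := by
        rw [boundary_contract, hec, map_sub, neg_sub]
    _ = z := by
        rw [contract_cone_of_mem_chains_deletion hzdel,
          contract_eq_zero_of_mem_chains_deletion hb, sub_zero]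

end Acyclic

section ReducedHomology

variable {F : Type} [Field F]

/-- The inclusion of the chains of `X` into the chains of the full simplex on `V`. -/
noncomputable def chainIncl (F : Type) [Field F] (X : Set (Finset V)) (n : ℕ) :
    SChain F X n →ₗ[F] Finset V →₀ F :=
  Finsupp.lmapDomain F F Subtype.val

lemma chainIncl_injective (X : Set (Finset V)) (n : ℕ) :
    Function.Injective (chainIncl F X n) :=
  Finsupp.mapDomain_injective Subtype.val_injective

lemma range_chainIncl (X : Set (Finset V)) (n : ℕ) :
    LinearMap.range (chainIncl F X n) = chains F X n := by
  have h := Finsupp.lmapDomain_supported F F (Subtype.val : Face X n → Finset V) Set.univ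
  rw [Finsupp.supported_univ, Submodule.map_top, Set.image_univ] at h
  exact h.trans (congrArg (Finsupp.supported F F) Subtype.range_coe)

lemma chainIncl_single {X : Set (Finset V)} {n : ℕ} (σ : Face X n) (r : F) :
    chainIncl F X n (Finsupp.single σ r : Face X n →₀ F) = Finsupp.single σ.1 r :=
  Finsupp.mapDomain_single

variable [LinearOrder V] {X : Set (Finset V)}

lemma sbdry_single {n : ℕ} (σ : Face X (n + 1)) :
    sbdry F X n (Finsupp.single σ 1 : Face X (n + 1) →₀ F) = bdryElem F X n σ :=
  (Finsupp.lsum_single F _ σ 1).trans (one_smul F _)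

lemma chainIncl_bdryElem (hX : IsComplex X) {n : ℕ} (σ : Face X (n + 1)) :
    chainIncl F X n (bdryElem F X n σ) = boundary F (Finsupp.single σ.1 1) := by
  rw [boundary_single subset_rfl, ← sum_attach]
  refine (map_sum (chainIncl F X n) _ _).trans (sum_congr rfl fun x _ => ?_)
  have hx : σ.1.erase x ∈ X := hX σ.1 σ.2.1 _ (erase_subset x.1 σ.1)
  have hσx : #(σ.1.erase x) = n := by rw [card_erase_of_mem x.2, σ.2.2, Nat.add_sub_cancel]
  calc chainIncl F X n _
      = chainIncl F X n (vertexSign F σ.1 x •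
          (Finsupp.single (⟨σ.1.erase x, hx, hσx⟩ : Face X n) 1 : SChain F X n)) :=
        congrArg (chainIncl F X n) (dif_pos hx)
    _ = vertexSign F σ.1 x • Finsupp.single (σ.1.erase x) 1 :=
        (map_smul (chainIncl F X n) _ _).trans (congrArg (_ • ·) (chainIncl_single _ 1))
    _ = contract F x.1 (Finsupp.single σ.1 1) := by
        rw [contract_single_of_mem x.2, Finsupp.smul_single_one, one_mul]

lemma chainIncl_sbdry (hX : IsComplex X) {n : ℕ} (c : SChain F X (n + 1)) :
    chainIncl F X n (sbdry F X n c) = boundary F (chainIncl F X (n + 1) c) := by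
  have h : chainIncl F X n ∘ₗ sbdry F X n = boundary F ∘ₗ chainIncl F X (n + 1) := by
    refine Finsupp.lhom_ext' fun σ => LinearMap.ext_ring ?_
    change chainIncl F X n (sbdry F X n (Finsupp.single σ 1 : Face X (n + 1) →₀ F)) =
      boundary F (chainIncl F X (n + 1) (Finsupp.single σ 1 : Face X (n + 1) →₀ F))
    rw [sbdry_single, chainIncl_bdryElem hX, chainIncl_single]
  exact LinearMap.congr_fun h c

lemma mem_scyc_iff (hX : IsComplex X) {n : ℕ} (c : SChain F X n) :
    c ∈ scyc F X n ↔ boundary F (chainIncl F X n c) = 0 := by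
  cases n with
  | zero =>
    have hc : chainIncl F X 0 c ∈ chains F X 0 := range_chainIncl (F := F) X 0 ▸ ⟨c, rfl⟩
    exact iff_of_true Submodule.mem_top (boundary_eq_zero_of_mem_chains_zero hc)
  | succ n =>
    rw [← chainIncl_sbdry hX, map_eq_zero_iff _ (chainIncl_injective X n)]
    exact LinearMap.mem_ker

theorem subsingleton_RH_iff_acyclicAt (hX : IsComplex X) {n : ℕ} :
    Subsingleton (RH F X n) ↔ AcyclicAt F X n := by
  rw [Submodule.Quotient.subsingleton_iff, Submodule.comap_subtype_eq_top]
  simp only [AcyclicAt, ← range_chainIncl, LinearMap.mem_range, SetLike.le_def, mem_scyc_iff hX,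
    forall_exists_index, forall_apply_eq_imp_iff, exists_exists_eq_and, ← chainIncl_sbdry hX,
    (chainIncl_injective X n).eq_iff]

theorem subsingleton_RH_deletion (hX : IsComplex X) {v : V} {n : ℕ}
    (hXn : Subsingleton (RH F X n)) (hlink : Subsingleton (RH F (link X {v}) n)) :
    Subsingleton (RH F (deletion X v) n) := by
  rw [subsingleton_RH_iff_acyclicAt hX] at hXn
  rw [subsingleton_RH_iff_acyclicAt (hX.link _)] at hlink
  rw [subsingleton_RH_iff_acyclicAt (hX.deletion v)]
  exact acyclicAt_deletion hX hXn hlink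

theorem subsingleton_RH_link_singleton (hX : IsComplex X) {v : V} {n : ℕ}
    (hXn : Subsingleton (RH F X (n + 1))) (hdel : Subsingleton (RH F (deletion X v) n)) :
    Subsingleton (RH F (link X {v}) n) := by
  rw [subsingleton_RH_iff_acyclicAt hX] at hXn
  rw [subsingleton_RH_iff_acyclicAt (hX.deletion v)] at hdel
  rw [subsingleton_RH_iff_acyclicAt (hX.link _)]
  exact acyclicAt_link_singleton hX hXn hdel

end ReducedHomology

section PropertyP

variable {V : Type} [Fintype V] [LinearOrder V] {F : Type} [Field F] {X : Set (Finset V)}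
  {A : Finset V} {d k₁ k₂ : ℕ}

theorem PropertyP.succ_left (hX : IsComplex X) (h : PropertyP F X A d k₁ (k₂ + 1)) :
    PropertyP F X A d (k₁ + 1) k₂ := by
  intro σ₁ σ₂ hσ₁ hσ₂ hdisj hk₁ hk₂ i hi
  obtain hk₁' | hk₁' := hk₁.lt_or_eq
  · exact h σ₁ σ₂ hσ₁ hσ₂ hdisj (Nat.le_of_lt_succ hk₁') (Nat.le_succ_of_le hk₂) i hi
  obtain ⟨v, τ, hvτ, rfl, hτ⟩ := card_eq_succ.1 hk₁'
  obtain ⟨hvA, hτA⟩ := insert_subset_iff.1 hσ₁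
  obtain ⟨hvσ₂, hτσ₂⟩ := disjoint_insert_left.1 hdisj
  rw [link_induce_compl_insert X hvσ₂]
  refine subsingleton_RH_deletion ((hX.induce _).link _)
    (h τ σ₂ hτA hσ₂ hτσ₂ hτ.le (Nat.le_succ_of_le hk₂) i hi) ?_
  rw [← link_insert _ hvσ₂]
  exact h τ (insert v σ₂) hτA (insert_subset hvA hσ₂) (disjoint_insert_right.2 ⟨hvτ, hτσ₂⟩)
    hτ.le ((card_insert_le v σ₂).trans (Nat.succ_le_succ hk₂)) i hi

theorem PropertyP.succ_right (hX : IsComplex X) (h : PropertyP F X A d (k₁ + 1) k₂) :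
    PropertyP F X A d k₁ (k₂ + 1) := by
  intro σ₁ σ₂ hσ₁ hσ₂ hdisj hk₁ hk₂ i hi
  obtain hk₂' | hk₂' := hk₂.lt_or_eq
  · exact h σ₁ σ₂ hσ₁ hσ₂ hdisj (Nat.le_succ_of_le hk₁) (Nat.le_of_lt_succ hk₂') i hi
  obtain ⟨v, τ, hvτ, rfl, hτ⟩ := card_eq_succ.1 hk₂'
  obtain ⟨hvA, hτA⟩ := insert_subset_iff.1 hσ₂
  obtain ⟨-, hσ₁τ⟩ := disjoint_insert_right.1 hdisj
  rw [link_insert _ hvτ]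
  refine subsingleton_RH_link_singleton ((hX.induce _).link _)
    (h σ₁ τ hσ₁ hτA hσ₁τ (Nat.le_succ_of_le hk₁) hτ.le (i + 1) (Nat.le_succ_of_le hi)) ?_
  rw [← link_induce_compl_insert X hvτ]
  exact h (insert v σ₁) τ (insert_subset hvA hσ₁) hτA (disjoint_insert_left.2 ⟨hvτ, hσ₁τ⟩)
    ((card_insert_le v σ₁).trans (Nat.succ_le_succ hk₁)) hτ.le i hi

end PropertyP

/-- **Proposition 2.3**: for a fixed pair `(X, A)` and `k₁ ≥ 0`, `k₂ ≥ 1`, the properties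
`P_d(k₁,k₂)` and `P_d(k₁+1,k₂-1)` are equivalent. -/
theorem propertyP_shift
    {V : Type} [Fintype V] [LinearOrder V] (F : Type) [Field F]
    (X : Set (Finset V)) (hX : IsComplex X) (A : Finset V)
    (d k₁ k₂ : ℕ) (hk₂ : 1 ≤ k₂) :
    PropertyP F X A d k₁ k₂ ↔ PropertyP F X A d (k₁ + 1) (k₂ - 1) := by
  obtain ⟨k, rfl⟩ := Nat.exists_eq_add_of_le' hk₂
  exact ⟨PropertyP.succ_left hX, PropertyP.succ_right hX⟩
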